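/- arXiv:0710.1969 — 2 statements merged into one kernel-verified Lean document; each statement's English description precedes it below -/
import Mathlib

section
/- On ℂ⁴ with coordinates (x, t₂, t₁, y), let ω₁(w)(v) = v_{t₁} − (1/2)x·v_{t₂} + (1/2)t₂·v_x and ω₂(w)(v) = v_y + t₁v_{t₂} − t₂v_{t₁} + (1/3)t₂x·v_{t₂} − (1/3)t₂²·v_x, and let D_w = ker(ω₁(w)) ∩ ker(ω₂(w)). If X : ℂ⁴ → ℂ⁴ is a differentiable vector field with X(w) ∈ D_w for all w such that for every differentiable vector field Y valued in D the bracket [X,Y] is also valued in D, then X = 0. (The characteristic space of this rank-2 system is zero at every point, so its class equals 4.) -/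
/- Cartan's formula turns the bracket condition on `X` into `dω₁(X, Y) = 0` for all `Y` in `D`.
Here `dω₁ = -dx ∧ dt₂`, and every constant vector field on the `(x, t₂)`-plane lifts to a field
`Y` in `D`, so the `x`- and `t₂`-components of `X` vanish; membership in `D` then forces the other
two components to vanish as well. -/

open Filter Topology VectorField

section OneForm

variable {𝕜 E F : Type*} [NontriviallyNormedField 𝕜] [NormedAddCommGroup E] [NormedSpace 𝕜 E]
  [NormedAddCommGroup F] [NormedSpace 𝕜 F] {ω : E → E →L[𝕜] F} {X Y : E → E} {w : E}

theorem apply_fderiv_eq_neg_of_eventually_apply_eq_zero (hω : DifferentiableAt 𝕜 ω w)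
    (hX : DifferentiableAt 𝕜 X w) (hωX : ∀ᶠ z in 𝓝 w, ω z (X z) = 0) (u : E) :
    ω w (fderiv 𝕜 X w u) = -fderiv 𝕜 ω w u (X w) := by
  have hfderiv : fderiv 𝕜 (fun z ↦ ω z (X z)) w = 0 := by
    rw [EventuallyEq.fderiv_eq (f := fun _ ↦ (0 : F)) hωX, fderiv_fun_const, Pi.zero_apply]
  rw [fderiv_clm_apply hω hX] at hfderiv
  exact eq_neg_of_add_eq_zero_left (DFunLike.congr_fun hfderiv u)

-- Cartan's formula `ω [X, Y] = X (ω Y) - Y (ω X) - dω(X, Y)`: the first two terms vanish here.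
theorem apply_lieBracket_of_eventually_apply_eq_zero (hω : DifferentiableAt 𝕜 ω w)
    (hX : DifferentiableAt 𝕜 X w) (hY : DifferentiableAt 𝕜 Y w)
    (hωX : ∀ᶠ z in 𝓝 w, ω z (X z) = 0) (hωY : ∀ᶠ z in 𝓝 w, ω z (Y z) = 0) :
    ω w (lieBracket 𝕜 X Y w) = fderiv 𝕜 ω w (Y w) (X w) - fderiv 𝕜 ω w (X w) (Y w) := by
  rw [lieBracket, map_sub, apply_fderiv_eq_neg_of_eventually_apply_eq_zero hω hY hωY,
    apply_fderiv_eq_neg_of_eventually_apply_eq_zero hω hX hωX, neg_sub_neg]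

end OneForm

section TwistorSystem

open ContinuousLinearMap (proj)

variable {𝕜 : Type*} [NontriviallyNormedField 𝕜]

/-- The form `ω₁ = dt₁ - ½ x dt₂ + ½ t₂ dx` of the twistor system, over any normed field; the
indices `0, 1, 2, 3` stand for the coordinates `x, t₂, t₁, y`. -/
def twistorForm₁ (w : Fin 4 → 𝕜) : (Fin 4 → 𝕜) →L[𝕜] 𝕜 :=
  proj 2 - ((1 / 2) * w 0) • proj 1 + ((1 / 2) * w 1) • proj 0

/-- The form `ω₂ = dy + t₁ dt₂ - t₂ dt₁ + ⅓ t₂ x dt₂ - ⅓ t₂² dx` of the twistor system, in the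
same coordinates `x, t₂, t₁, y` as `twistorForm₁`. -/
def twistorForm₂ (w : Fin 4 → 𝕜) : (Fin 4 → 𝕜) →L[𝕜] 𝕜 :=
  proj 3 + w 2 • proj 1 - w 1 • proj 2 + ((1 / 3) * w 1 * w 0) • proj 1
    - ((1 / 3) * w 1 ^ 2) • proj 0

theorem twistorForm₁_apply (w v : Fin 4 → 𝕜) :
    twistorForm₁ w v = v 2 - (1 / 2) * w 0 * v 1 + (1 / 2) * w 1 * v 0 :=
  rfl

theorem twistorForm₂_apply (w v : Fin 4 → 𝕜) :
    twistorForm₂ w v = v 3 + w 2 * v 1 - w 1 * v 2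
      + (1 / 3) * w 1 * w 0 * v 1 - (1 / 3) * w 1 ^ 2 * v 0 :=
  rfl

theorem eq_zero_of_twistorForm_apply_eq_zero {w v : Fin 4 → 𝕜} (h₁ : twistorForm₁ w v = 0)
    (h₂ : twistorForm₂ w v = 0) (hv₀ : v 0 = 0) (hv₁ : v 1 = 0) : v = 0 := by
  have hv₂ : v 2 = 0 := by simpa [twistorForm₁_apply, hv₀, hv₁] using h₁
  have hv₃ : v 3 = 0 := by simpa [twistorForm₂_apply, hv₀, hv₁, hv₂] using h₂
  ext i
  fin_cases i <;> assumption

theorem differentiable_twistorForm₁ : Differentiable 𝕜 (twistorForm₁ (𝕜 := 𝕜)) := by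
  unfold twistorForm₁
  fun_prop

theorem fderiv_twistorForm₁_apply (w u v : Fin 4 → 𝕜) :
    fderiv 𝕜 twistorForm₁ w u v = (1 / 2) * (u 1 * v 0 - u 0 * v 1) := by
  have hcoord (i : Fin 4) : HasFDerivAt (fun z : Fin 4 → 𝕜 ↦ z i)
      (proj (R := 𝕜) (φ := fun _ ↦ 𝕜) i) w :=
    hasFDerivAt_apply i w
  have hform : HasFDerivAt (fun z ↦ twistorForm₁ z v) _ w :=
    ((((hcoord 0).const_mul (1 / 2)).mul_const (v 1)).const_sub (v 2)).add
      (((hcoord 1).const_mul (1 / 2)).mul_const (v 0))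
  have happly := (differentiable_twistorForm₁ w).hasFDerivAt.clm_apply (hasFDerivAt_const v w)
  have h := DFunLike.congr_fun (happly.unique hform) u
  simp only [ContinuousLinearMap.comp_zero, zero_add, ContinuousLinearMap.flip_apply, add_apply,
    neg_apply, smul_apply, ContinuousLinearMap.proj_apply, smul_eq_mul] at h
  linear_combination h

theorem twistorForm₁_lieBracket [CharZero 𝕜] {X Y : (Fin 4 → 𝕜) → Fin 4 → 𝕜} {w : Fin 4 → 𝕜}
    (hX : DifferentiableAt 𝕜 X w) (hY : DifferentiableAt 𝕜 Y w)
    (hωX : ∀ᶠ z in 𝓝 w, twistorForm₁ z (X z) = 0)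
    (hωY : ∀ᶠ z in 𝓝 w, twistorForm₁ z (Y z) = 0) :
    twistorForm₁ w (lieBracket 𝕜 X Y w) = X w 0 * Y w 1 - X w 1 * Y w 0 := by
  rw [apply_lieBracket_of_eventually_apply_eq_zero (differentiable_twistorForm₁ w) hX hY hωX hωY,
    fderiv_twistorForm₁_apply, fderiv_twistorForm₁_apply]
  ring

/-- The vector field annihilated by both twistor forms that lifts the constant vector field
`a ∂/∂x + b ∂/∂t₂` of the `(x, t₂)`-plane. -/
def horizontalLift (a b : 𝕜) (z : Fin 4 → 𝕜) : Fin 4 → 𝕜 :=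
  ![a, b, (1 / 2) * (z 0 * b - z 1 * a), (1 / 6) * z 1 * (z 0 * b - z 1 * a) - z 2 * b]

theorem differentiable_horizontalLift (a b : 𝕜) : Differentiable 𝕜 (horizontalLift a b) := by
  refine differentiable_pi.2 fun i ↦ ?_
  fin_cases i <;> simp only [horizontalLift, Fin.reduceFinMk, Matrix.cons_val] <;> fun_prop

theorem twistorForm₁_horizontalLift (a b : 𝕜) (z : Fin 4 → 𝕜) :
    twistorForm₁ z (horizontalLift a b z) = 0 := by
  simp only [twistorForm₁_apply, horizontalLift, Matrix.cons_val]
  ring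

theorem twistorForm₂_horizontalLift [CharZero 𝕜] (a b : 𝕜) (z : Fin 4 → 𝕜) :
    twistorForm₂ z (horizontalLift a b z) = 0 := by
  simp only [twistorForm₂_apply, horizontalLift, Matrix.cons_val]
  ring

theorem stmt8_general [CharZero 𝕜] (ω₁ ω₂ : (Fin 4 → 𝕜) → ((Fin 4 → 𝕜) →L[𝕜] 𝕜))
    (hω₁ : ∀ w v, ω₁ w v = v 2 - (1 / 2) * w 0 * v 1 + (1 / 2) * w 1 * v 0)
    (hω₂ : ∀ w v, ω₂ w v = v 3 + w 2 * v 1 - w 1 * v 2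
      + (1 / 3) * w 1 * w 0 * v 1 - (1 / 3) * w 1 ^ 2 * v 0)
    {X : (Fin 4 → 𝕜) → Fin 4 → 𝕜} {w : Fin 4 → 𝕜} (hX : DifferentiableAt 𝕜 X w)
    (hω₁X : ∀ᶠ z in 𝓝 w, ω₁ z (X z) = 0) (hω₂X : ω₂ w (X w) = 0)
    (hbr : ∀ Y : (Fin 4 → 𝕜) → Fin 4 → 𝕜, Differentiable 𝕜 Y →
      (∀ z, ω₁ z (Y z) = 0 ∧ ω₂ z (Y z) = 0) → ω₁ w (lieBracket 𝕜 X Y w) = 0) :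
    X w = 0 := by
  obtain rfl : ω₁ = twistorForm₁ := funext fun w ↦ ContinuousLinearMap.ext (hω₁ w)
  obtain rfl : ω₂ = twistorForm₂ := funext fun w ↦ ContinuousLinearMap.ext (hω₂ w)
  have hwedge (a b : 𝕜) : X w 0 * b - X w 1 * a = 0 := by
    have h := hbr (horizontalLift a b) (differentiable_horizontalLift a b) fun z ↦
      ⟨twistorForm₁_horizontalLift a b z, twistorForm₂_horizontalLift a b z⟩
    rwa [twistorForm₁_lieBracket hX (differentiable_horizontalLift a b w) hω₁X
      (.of_forall (twistorForm₁_horizontalLift a b))] at h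
  have hX₀ : X w 0 = 0 := by simpa using hwedge 0 1
  have hX₁ : X w 1 = 0 := by simpa using hwedge 1 0
  exact eq_zero_of_twistorForm_apply_eq_zero hω₁X.self_of_nhds hω₂X hX₀ hX₁

end TwistorSystem

/-- For the SO(5) twistor Pfaffian system `{ω₁, ω₂}` on `ℂ⁴` with
distribution `D = ker ω₁ ∩ ker ω₂`, any differentiable vector field `X` valued in `D`
whose bracket with every differentiable vector field valued in `D` remains valued in `D`
must vanish: the characteristic space is zero at every point, so the class equals 4. -/
theorem stmt8 (ω₁ ω₂ : (Fin 4 → ℂ) → ((Fin 4 → ℂ) →L[ℂ] ℂ))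
    (hω₁ : ∀ w v, ω₁ w v = v 2 - (1/2) * w 0 * v 1 + (1/2) * w 1 * v 0)
    (hω₂ : ∀ w v, ω₂ w v = v 3 + w 2 * v 1 - w 1 * v 2
      + (1/3) * w 1 * w 0 * v 1 - (1/3) * w 1 ^ 2 * v 0)
    (X : (Fin 4 → ℂ) → (Fin 4 → ℂ)) (hXdiff : Differentiable ℂ X)
    (hXD : ∀ w, ω₁ w (X w) = 0 ∧ ω₂ w (X w) = 0)
    (hbr : ∀ Y : (Fin 4 → ℂ) → (Fin 4 → ℂ), Differentiable ℂ Y →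
      (∀ w, ω₁ w (Y w) = 0 ∧ ω₂ w (Y w) = 0) →
      ∀ w, ω₁ w (fderiv ℂ Y w (X w) - fderiv ℂ X w (Y w)) = 0 ∧
           ω₂ w (fderiv ℂ Y w (X w) - fderiv ℂ X w (Y w)) = 0) :
    X = 0 :=
  funext fun w ↦ stmt8_general ω₁ ω₂ hω₁ hω₂ (hXdiff w) (.of_forall fun z ↦ (hXD z).1)
    (hXD w).2 fun Y hY hYD ↦ (hbr Y hY hYD w).1
end

section
/- Let ω be the 1-form on ℂ³ given by ω(w)(v) = v₃ + w₂v₁ − w₁v₂. Then: (a) for every w ∈ ℂ³, ker(ω(w)) is exactly the linear span of the vectors (1,0,−w₂) and (0,1,w₁); and (b) the map φ : ℂ³ → ℂ³, φ(w₁,w₂,w₃) = (w₃ − w₁w₂, 2w₂, w₁), is bijective and for every w, v ∈ ℂ³ one has ω(w)(v) = 0 if and only if u₁ + z₂u₃ = 0, where z = φ(w) and u = (fderiv φ w)(v). (This identifies the superhorizontal Pfaffian system of the twistor fibration Sp(2)/Sp(1)×U(1) ≅ ℂP³ → Sp(2)/Sp(1)×Sp(1) ≅ S⁴, whose superhorizontal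 distribution is spanned by ∂₁ − w₂∂₃ and ∂₂ + w₁∂₃, with the model system S²₃ = {dz₁ + z₂dz₃}.) -/
/-!
The map `φ` pulls the model form `dz₁ + z₂dz₃` back to `ω` itself, not merely to a multiple of it:
`d(w₃ - w₁w₂) + 2w₂dw₁ = dw₃ + w₂dw₁ - w₁dw₂`. So the two Pfaffian systems correspond as soon as
`φ` is bijective, and `φ` is triangular with `2` as the only coefficient that has to be inverted.
-/

section Forms

variable {R : Type*} [CommRing R] [TopologicalSpace R] [IsTopologicalRing R]

/-- The 1-form `dw₃ + w₂dw₁ - w₁dw₂`, whose kernel is the superhorizontal distribution of the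
twistor fibration `ℂP³ → S⁴` in an affine chart. Coordinates are indexed from `0`. -/
def superhorizontalForm (w : Fin 3 → R) : (Fin 3 → R) →L[R] R :=
  .proj 2 + w 1 • .proj 0 - w 0 • .proj 1

/-- The 1-form `dz₁ + z₂dz₃` generating the model Pfaffian system `S²₃`. Coordinates are indexed
from `0`. -/
def modelForm (z : Fin 3 → R) : (Fin 3 → R) →L[R] R :=
  .proj 0 + z 1 • .proj 2

theorem superhorizontalForm_apply (w v : Fin 3 → R) :
    superhorizontalForm w v = v 2 + w 1 * v 0 - w 0 * v 1 :=
  rfl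

theorem modelForm_apply (z u : Fin 3 → R) : modelForm z u = u 0 + z 1 * u 2 :=
  rfl

theorem superhorizontalForm_eq_zero_iff_mem_span (w v : Fin 3 → R) :
    superhorizontalForm w v = 0 ↔ v ∈ Submodule.span R {![1, 0, -w 1], ![0, 1, w 0]} := by
  rw [superhorizontalForm_apply, Submodule.mem_span_pair]
  constructor
  · intro hv
    refine ⟨v 0, v 1, ?_⟩
    ext i
    fin_cases i
    · simp
    · simp
    · suffices v 0 * -w 1 + v 1 * w 0 = v 2 by simpa
      linear_combination -hv
  · rintro ⟨a, b, rfl⟩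
    suffices a * -w 1 + b * w 0 + w 1 * a - w 0 * b = 0 by simpa
    ring

end Forms

section Chart

variable {R : Type*} [CommRing R]

/-- The change of coordinates `φ(w₁, w₂, w₃) = (w₃ - w₁w₂, 2w₂, w₁)` from the superhorizontal
system to the model system `S²₃`. It is a plain function, since it is invertible only where `2`
is. -/
def modelChart (w : Fin 3 → R) : Fin 3 → R :=
  ![w 2 - w 0 * w 1, 2 * w 1, w 0]

theorem modelChart_bijective [Invertible (2 : R)] :
    Function.Bijective (modelChart : (Fin 3 → R) → Fin 3 → R) := by
  refine Function.bijective_iff_has_inverse.2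
    ⟨fun z => ![z 2, ⅟2 * z 1, z 0 + z 2 * (⅟2 * z 1)], fun w => ?_, fun z => ?_⟩ <;>
  · ext i
    fin_cases i <;> simp [modelChart]

end Chart

section Derivative

variable {𝕜 : Type*} [NontriviallyNormedField 𝕜]

theorem hasFDerivAt_modelChart (w : Fin 3 → 𝕜) :
    HasFDerivAt modelChart
      (.pi ![.proj 2 - (w 0 • .proj 1 + w 1 • .proj 0), (2 : 𝕜) • .proj 1, .proj 0] :
        (Fin 3 → 𝕜) →L[𝕜] Fin 3 → 𝕜) w := by
  have hcoord (i : Fin 3) : HasFDerivAt (fun x : Fin 3 → 𝕜 => x i)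
      (.proj i : (Fin 3 → 𝕜) →L[𝕜] 𝕜) w :=
    hasFDerivAt_apply i w
  refine hasFDerivAt_pi.2 fun i => ?_
  fin_cases i
  · exact (hcoord 2).sub ((hcoord 0).mul (hcoord 1))
  · exact (hcoord 1).const_mul 2
  · exact hcoord 0

theorem modelForm_comp_fderiv_modelChart (w : Fin 3 → 𝕜) :
    (modelForm (modelChart w)).comp (fderiv 𝕜 modelChart w) = superhorizontalForm w := by
  ext1 v
  rw [ContinuousLinearMap.comp_apply, (hasFDerivAt_modelChart w).fderiv, modelForm_apply,
    superhorizontalForm_apply]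
  change v 2 - (w 0 * v 1 + w 1 * v 0) + 2 * w 1 * v 0 = v 2 + w 1 * v 0 - w 0 * v 1
  ring

end Derivative

theorem stmt14_general {𝕜 : Type*} [NontriviallyNormedField 𝕜] [NeZero (2 : 𝕜)]
    (ω : (Fin 3 → 𝕜) → ((Fin 3 → 𝕜) →L[𝕜] 𝕜))
    (hω : ∀ w v, ω w v = v 2 + w 1 * v 0 - w 0 * v 1)
    (φ : (Fin 3 → 𝕜) → (Fin 3 → 𝕜))
    (hφ : ∀ w, φ w = ![w 2 - w 0 * w 1, 2 * w 1, w 0]) :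
    (∀ w v : Fin 3 → 𝕜, ω w v = 0 ↔
      v ∈ Submodule.span 𝕜 ({![1, 0, -w 1], ![0, 1, w 0]} : Set (Fin 3 → 𝕜))) ∧
    Function.Bijective φ ∧
    ∀ w v : Fin 3 → 𝕜, ω w v =
      (fderiv 𝕜 φ w v) 0 + (φ w) 1 * (fderiv 𝕜 φ w v) 2 := by
  obtain rfl : ω = superhorizontalForm := funext fun w => ContinuousLinearMap.ext (hω w)
  obtain rfl : φ = modelChart := funext hφ
  let : Invertible (2 : 𝕜) := invertibleOfNonzero two_ne_zero
  exact ⟨superhorizontalForm_eq_zero_iff_mem_span, modelChart_bijective,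
    fun w v => (DFunLike.congr_fun (modelForm_comp_fderiv_modelChart w) v).symm⟩

/-- For `ω(w)(v) = v₃ + w₂v₁ - w₁v₂` on `ℂ³`: (a) `ker (ω w)` is spanned
by `(1,0,-w₂)` and `(0,1,w₁)`; (b) `φ(w₁,w₂,w₃) = (w₃ - w₁w₂, 2w₂, w₁)` is bijective and
identifies `{ω}` (the superhorizontal system of `ℂP³ → S⁴`) with the model system
`S²₃ = {dz₁ + z₂dz₃}`. -/
theorem stmt14 (ω : (Fin 3 → ℂ) → ((Fin 3 → ℂ) →L[ℂ] ℂ))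
    (hω : ∀ w v, ω w v = v 2 + w 1 * v 0 - w 0 * v 1)
    (φ : (Fin 3 → ℂ) → (Fin 3 → ℂ))
    (hφ : ∀ w, φ w = ![w 2 - w 0 * w 1, 2 * w 1, w 0]) :
    (∀ w v : Fin 3 → ℂ, ω w v = 0 ↔
      v ∈ Submodule.span ℂ ({![1, 0, -w 1], ![0, 1, w 0]} : Set (Fin 3 → ℂ))) ∧
    Function.Bijective φ ∧
    ∀ w v : Fin 3 → ℂ, ω w v = 0 ↔
      (fderiv ℂ φ w v) 0 + (φ w) 1 * (fderiv ℂ φ w v) 2 = 0 := by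
  obtain ⟨hker, hbij, hpullback⟩ := stmt14_general ω hω φ hφ
  exact ⟨hker, hbij, fun w v => by rw [hpullback]⟩
end
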